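/- Let f : ℝ → ℂ be infinitely differentiable on (0,∞) and suppose ∑_{n=0}^∞ (2^n/(2n+1)!) ∫_0^∞ x^{2n+1} |f^{(n)}(x)|² dx < ∞, where f^{(n)} is the n-th derivative of f within (0,∞). Then there exists a holomorphic function F on the sector Δ = {z ∈ ℂ : Re z > 0 and |Im z| < Re z} with F(x) = f(x) for all x ∈ (0,∞), and F satisfies ∫_Δ |F(z)|² dA(z) = ∑_{n=0}^∞ (2^n/(2n+1)!) ∫_0^∞ x^{2n+1} |f^{(n)}(x)|² dx < ∞; in particular F belongs to the Bergman space A²(Δ). -/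

import Mathlib

open MeasureTheory Set
open scoped ENNReal NNReal

/-- The open sector `Δ = {z : Re z > 0 ∧ |Im z| < Re z}`. -/
def Delta : Set ℂ := {z : ℂ | 0 < z.re ∧ |z.im| < z.re}

noncomputable def ahsK (t : ℝ) (N : ℕ) : ℝ :=
  ∫ θ in (0:ℝ)..(Real.pi / 4), Real.cosh (2 * t * θ) * (1 - Real.sin (2 * θ)) ^ N

noncomputable def ahsP (t : ℝ) (N : ℕ) : ℝ := ∏ k ∈ Finset.range N, (((k:ℝ) + 1) ^ 2 + t ^ 2)

noncomputable def ahsC (N : ℕ) : ℝ := (2:ℝ) ^ N / (Nat.factorial (2 * N + 1) : ℝ)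

lemma ahsK_rec (t : ℝ) (N : ℕ) :
    (t ^ 2 + ((N:ℝ) + 1) ^ 2) * ahsK t (N + 1) =
      ((N:ℝ) + 1) * (2 * N + 1) * ahsK t N - ((N:ℝ) + 1) / 2 := by
  have hd : ∀ θ : ℝ, HasDerivAt (fun θ : ℝ =>
      (1/4:ℝ) * (2 * t * Real.sinh (2 * t * θ) * (1 - Real.sin (2 * θ)) ^ (N + 1)
        + Real.cosh (2 * t * θ) * (2 * ((N:ℝ) + 1) * Real.cos (2 * θ) * (1 - Real.sin (2 * θ)) ^ N)))
      ((t ^ 2 + ((N:ℝ) + 1) ^ 2) * (Real.cosh (2 * t * θ) * (1 - Real.sin (2 * θ)) ^ (N + 1))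
        - ((N:ℝ) + 1) * (2 * N + 1) * (Real.cosh (2 * t * θ) * (1 - Real.sin (2 * θ)) ^ N)) θ := by
    intro θ
    have e1 : HasDerivAt (fun θ : ℝ => 2 * t * θ) (2 * t) θ := by
      simpa using (hasDerivAt_id θ).const_mul (2 * t)
    have e2 : HasDerivAt (fun θ : ℝ => 2 * θ) 2 θ := by
      simpa using (hasDerivAt_id θ).const_mul (2:ℝ)
    have e3 := e1.sinh
    have e4 := e1.cosh
    have e5 := e2.sin
    have e6 := e2.cos
    have e7 := e5.const_sub 1
    have := ((((e3.const_mul (2*t)).mul (e7.pow (N+1))).add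
      (e4.mul ((e6.const_mul (2 * ((N:ℝ) + 1))).mul (e7.pow N)))).const_mul (1/4:ℝ))
    refine this.congr_deriv ?_
    have hs : Real.cos (2 * θ) ^ 2 = (1 - Real.sin (2 * θ)) * (1 + Real.sin (2 * θ)) := by
      have := Real.sin_sq_add_cos_sq (2 * θ); linarith
    simp only [Pi.pow_apply, Pi.mul_apply]
    generalize Real.cos (2 * θ) = c at *
    generalize Real.sin (2 * θ) = s at *
    rcases N with _ | N
    · simp; ring
    · simp only [Nat.add_sub_cancel]
      push_cast
      ring_nf
      rw [hs]
      ring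
  have h := intervalIntegral.integral_eq_sub_of_hasDerivAt (a := 0) (b := Real.pi / 4)
    (fun θ _ => hd θ) (by apply Continuous.intervalIntegrable; fun_prop)
  rw [intervalIntegral.integral_sub (by apply Continuous.intervalIntegrable; fun_prop)
    (by apply Continuous.intervalIntegrable; fun_prop), intervalIntegral.integral_const_mul,
    intervalIntegral.integral_const_mul] at h
  have hh : 2 * (Real.pi / 4) = Real.pi / 2 := by ring
  simp [hh] at h
  unfold ahsK
  linarith

lemma ahsK_nonneg (t : ℝ) (N : ℕ) : 0 ≤ ahsK t N := by
  apply intervalIntegral.integral_nonneg (by positivity)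
  intro θ _
  have := Real.sin_le_one (2 * θ)
  have := Real.cosh_pos (2 * t * θ)
  have : 0 ≤ 1 - Real.sin (2 * θ) := by linarith
  positivity

lemma ahsP_pos (t : ℝ) (N : ℕ) : 0 < ahsP t N := Finset.prod_pos (fun k _ => by positivity)

lemma ahsC_pos (N : ℕ) : 0 < ahsC N := by unfold ahsC; positivity

lemma ahsK_anti (t : ℝ) (N : ℕ) : ahsK t N ≤ ahsK t 0 := by
  apply intervalIntegral.integral_mono_on (by positivity)
    (by apply Continuous.intervalIntegrable; fun_prop)
    (by apply Continuous.intervalIntegrable; fun_prop)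
  intro θ hθ
  have h1 := Real.sin_le_one (2 * θ)
  have h2 : 0 ≤ Real.sin (2 * θ) := by
    apply Real.sin_nonneg_of_nonneg_of_le_pi <;> have := hθ.1 <;> have := hθ.2 <;> linarith [Real.pi_pos]
  have := Real.cosh_pos (2 * t * θ)
  refine mul_le_mul_of_nonneg_left ?_ this.le
  rw [pow_zero]
  exact pow_le_one₀ (by linarith) (by linarith)

lemma ahs_partial (t : ℝ) (N : ℕ) :
    2 * ahsK t 0 = ∑ n ∈ Finset.range N, ahsC n * ahsP t n +
      2 * (2 * N + 1) * (ahsC N * ahsP t N) * ahsK t N := by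
  induction N with
  | zero => simp [ahsC, ahsP]
  | succ N ih =>
    rw [ih, Finset.sum_range_succ, add_assoc]
    congr 1
    have h1 : ahsP t (N+1) = ahsP t N * (((N:ℝ) + 1) ^ 2 + t ^ 2) := Finset.prod_range_succ _ _
    have h2 : ahsC (N+1) * ((N + 1) * (2 * N + 3)) = ahsC N := by
      unfold ahsC
      rw [show 2 * (N+1) + 1 = (2 * N + 1) + 1 + 1 by ring, Nat.factorial_succ, Nat.factorial_succ]
      push_cast
      field_simp
      ring
    have h3 := ahsK_rec t N
    rw [h1, ← h2]
    push_cast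
    linear_combination (-ahsC (N+1) * ahsP t N * 2 * (2 * N + 3)) * h3

lemma ahs_hasSum (t : ℝ) : HasSum (fun n => ahsC n * ahsP t n) (2 * ahsK t 0) := by
  have hpos : ∀ n, 0 < ahsC n * ahsP t n := fun n => mul_pos (ahsC_pos n) (ahsP_pos t n)
  have h0 : Filter.Tendsto (fun n : ℕ => (2 * (n:ℝ) + 1) * (ahsC n * ahsP t n)) Filter.atTop (nhds 0) := by
    apply Summable.tendsto_atTop_zero
    apply summable_of_ratio_test_tendsto_lt_one (l := 1/2) (by norm_num)
    · filter_upwards with n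
      have := hpos n
      positivity
    · have h1 : ∀ N : ℕ, ‖(2 * ((N+1 : ℕ):ℝ) + 1) * (ahsC (N+1) * ahsP t (N+1))‖ /
          ‖(2 * (N:ℝ) + 1) * (ahsC N * ahsP t N)‖ =
            (((N:ℝ) + 1) ^ 2 + t ^ 2) / ((N + 1) * (2 * N + 1)) := by
        intro N
        have a := hpos N
        have b := hpos (N+1)
        rw [Real.norm_of_nonneg (by positivity), Real.norm_of_nonneg (by positivity)]
        have h1 : ahsP t (N+1) = ahsP t N * (((N:ℝ) + 1) ^ 2 + t ^ 2) := Finset.prod_range_succ _ _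
        have h2 : ahsC (N+1) * ((N + 1) * (2 * N + 3)) = ahsC N := by
          unfold ahsC
          rw [show 2 * (N+1) + 1 = (2 * N + 1) + 1 + 1 by ring, Nat.factorial_succ, Nat.factorial_succ]
          push_cast
          field_simp
          ring
        have c1 := ahsC_pos (N+1)
        have c2 := ahsP_pos t N
        rw [h1, ← h2]
        push_cast
        field_simp
        ring
      simp_rw [h1]
      have h2 : ∀ N : ℕ, (((N:ℝ) + 1) ^ 2 + t ^ 2) / ((N + 1) * (2 * N + 1)) =
          (1 + t ^ 2 * (1 / ((N:ℝ) + 1)) * (1 / ((N:ℝ) + 1))) / (2 - (1 / ((N:ℝ) + 1))) := by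
        intro N
        have : (2 - (1 / ((N:ℝ) + 1))) = (2 * N + 1) / (N + 1) := by field_simp; ring
        rw [this]
        field_simp
      simp_rw [h2]
      have hh := tendsto_one_div_add_atTop_nhds_zero_nat (𝕜 := ℝ)
      have := ((hh.const_mul (t^2)).mul hh |>.const_add 1).div (hh.const_sub 2) (by norm_num)
      simpa [Pi.div_def] using this
  rw [hasSum_iff_tendsto_nat_of_nonneg (fun n => (hpos n).le)]
  have h1 : ∀ N, ∑ n ∈ Finset.range N, ahsC n * ahsP t n = 2 * ahsK t 0 -
      2 * (2 * N + 1) * (ahsC N * ahsP t N) * ahsK t N := by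
    intro N; have := ahs_partial t N; linarith
  simp_rw [h1]
  have : Filter.Tendsto (fun N : ℕ => 2 * (2 * (N:ℝ) + 1) * (ahsC N * ahsP t N) * ahsK t N)
      Filter.atTop (nhds 0) := by
    apply squeeze_zero (g := fun N : ℕ => (2 * ahsK t 0) * ((2 * (N:ℝ) + 1) * (ahsC N * ahsP t N)))
    · intro N
      have := hpos N
      have := ahsK_nonneg t N
      positivity
    · intro N
      have a := hpos N
      have := ahsK_nonneg t N
      have b := ahsK_anti t N
      calc _ = 2 * ((2 * (N:ℝ) + 1) * (ahsC N * ahsP t N)) * ahsK t N := by ring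
        _ ≤ 2 * ((2 * (N:ℝ) + 1) * (ahsC N * ahsP t N)) * ahsK t 0 := by gcongr
        _ = _ := by ring
    · simpa using h0.const_mul (2 * ahsK t 0)
  simpa using this.const_sub (2 * ahsK t 0)

lemma ahs_weight (t : ℝ) : ∑' n, ENNReal.ofReal (ahsC n * ahsP t n) =
    ∫⁻ θ in Ioo (-(Real.pi / 4)) (Real.pi / 4), ENNReal.ofReal (Real.exp (-2 * t * θ)) := by
  rw [← ENNReal.ofReal_tsum_of_nonneg
    (fun n => (mul_pos (ahsC_pos n) (ahsP_pos t n)).le) (ahs_hasSum t).summable,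
    (ahs_hasSum t).tsum_eq]
  have hp := Real.pi_pos
  have hIntg : ∀ a b, IntervalIntegrable (fun θ => Real.exp (-2 * t * θ)) volume a b := fun a b => by
    apply Continuous.intervalIntegrable; fun_prop
  rw [setLIntegral_congr Ioo_ae_eq_Ioc, ← ofReal_integral_eq_lintegral_ofReal,
    ← intervalIntegral.integral_of_le (by linarith)]
  · congr 1
    rw [← intervalIntegral.integral_add_adjacent_intervals (hIntg _ 0) (hIntg 0 _)]
    have : ∫ θ in (-(Real.pi/4))..0, Real.exp (-2 * t * θ) =
        ∫ θ in (0:ℝ)..(Real.pi/4), Real.exp (2 * t * θ) := by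
      have := intervalIntegral.integral_comp_neg (a := 0) (b := Real.pi/4)
        (fun θ => Real.exp (-2 * t * θ))
      simpa using this.symm
    rw [this, ← intervalIntegral.integral_add (by apply Continuous.intervalIntegrable; fun_prop)
      (hIntg _ _), ahsK, ← intervalIntegral.integral_const_mul]
    congr 1
    ext θ
    rw [Real.cosh_eq, pow_zero]
    ring_nf
  · exact ((intervalIntegrable_iff_integrableOn_Ioc_of_le (by linarith)).1 (hIntg _ _))
  · filter_upwards with θ using (Real.exp_pos _).le
section fourierpart
open SchwartzMap FourierTransform

lemma ahs_ae_eq {f g : ℝ → ℂ} (hf : LocallyIntegrable f) (hg : LocallyIntegrable g)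
    (hfi : ∀ φ : 𝓢(ℝ, ℂ), Integrable (fun x => φ x * f x))
    (hgi : ∀ φ : 𝓢(ℝ, ℂ), Integrable (fun x => φ x * g x))
    (h : ∀ φ : 𝓢(ℝ, ℂ), ∫ x, φ x * f x = ∫ x, φ x * g x) : f =ᵐ[volume] g := by
  have : ∀ᵐ x, (f - g) x = 0 := by
    apply ae_eq_zero_of_integral_contDiff_smul_eq_zero (hf.sub hg)
    intro q hq hc
    have hg₁ : HasCompactSupport (Complex.ofRealCLM ∘ q) := hc.comp_left rfl
    have hg₂ : ContDiff ℝ (⊤ : ℕ∞) (Complex.ofRealCLM ∘ q) := by fun_prop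
    have h1 := h (hg₁.toSchwartzMap hg₂)
    have h2 := integral_sub (hfi (hg₁.toSchwartzMap hg₂)) (hgi (hg₁.toSchwartzMap hg₂))
    rw [h1, sub_self] at h2
    rw [← h2]
    congr 1
    ext x
    simp [mul_sub]
  filter_upwards [this] with x hx
  simpa [sub_eq_zero] using hx

lemma ahs_mul_integrable {f : ℝ → ℂ} (hf : MemLp f 2) (φ : 𝓢(ℝ, ℂ)) :
    Integrable (fun x => φ x * f x) := by
  have := (φ.memLp 2 volume).integrable_mul hf
  exact this

/-- Plancherel for `L¹ ∩ L²`. -/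
lemma ahs_fourier_L1_L2 {G : ℝ → ℂ} (h1 : Integrable G) (h2 : MemLp G 2) :
    (𝓕 (h2.toLp G) : Lp ℂ 2 (volume : Measure ℝ)) =ᵐ[volume] 𝓕 G := by
  have hb : Continuous (𝓕 G) := VectorFourier.fourierIntegral_continuous
    Real.continuous_fourierChar (by exact continuous_inner) h1
  have key : ∀ φ : 𝓢(ℝ, ℂ), ∫ x, φ x * (𝓕 (h2.toLp G) : Lp ℂ 2 (volume : Measure ℝ)) x
      = ∫ x, φ x * 𝓕 G x := by
    intro φ
    have a := congrArg (fun T => T φ) (Lp.fourier_toTemperedDistribution_eq (h2.toLp G))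
    simp only [TemperedDistribution.fourier_apply, Lp.toTemperedDistribution_apply, smul_eq_mul] at a
    rw [← a]
    have b := VectorFourier.integral_fourierIntegral_smul_eq_flip (L := innerₗ ℝ) (μ := volume)
      (ν := volume) Real.continuous_fourierChar continuous_inner φ.integrable h1
    simp only [smul_eq_mul, flip_innerₗ] at b
    refine Eq.trans ?_ b
    apply integral_congr_ae
    filter_upwards [h2.coeFn_toLp] with x hx
    rw [hx]
    rfl
  apply ahs_ae_eq _ hb.locallyIntegrable _ _ key
  · exact (Lp.memLp _).locallyIntegrable (by norm_num)
  · exact fun φ => ahs_mul_integrable (Lp.memLp _) φ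
  · intro φ
    refine φ.integrable.mul_bdd (c := ∫ x, ‖G x‖) hb.aestronglyMeasurable ?_
    filter_upwards with x
    exact VectorFourier.norm_fourierIntegral_le_integral_norm _ _ _ _ _

lemma ahs_L2_lintegral (f : Lp ℂ 2 (volume : Measure ℝ)) :
    ∫⁻ x, (‖f x‖₊ : ℝ≥0∞) ^ 2 = ENNReal.ofReal (‖f‖ ^ 2) := by
  have h := Lp.norm_def f
  have hm := Lp.memLp f
  rw [h, ← ENNReal.toReal_pow, ENNReal.ofReal_toReal (by simp [hm.eLpNorm_ne_top]),
    eLpNorm_eq_lintegral_rpow_enorm_toReal (by norm_num) (by norm_num), ← ENNReal.rpow_natCast,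
    ← ENNReal.rpow_mul]
  simp
  rfl

lemma ahs_plancherel_inv {h : ℝ → ℂ} (hh : MemLp h 2) :
    ∫⁻ x, (‖(𝓕⁻ (hh.toLp h) : Lp ℂ 2 (volume : Measure ℝ)) x‖₊ : ℝ≥0∞) ^ 2 =
      ∫⁻ x, (‖h x‖₊ : ℝ≥0∞) ^ 2 := by
  have e : ∫⁻ x, (‖h x‖₊ : ℝ≥0∞) ^ 2 = ∫⁻ x, (‖hh.toLp h x‖₊ : ℝ≥0∞) ^ 2 := by
    apply lintegral_congr_ae
    filter_upwards [hh.coeFn_toLp] with x hx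
    rw [hx]
  rw [e, ahs_L2_lintegral, ahs_L2_lintegral]
  congr 2
  exact (Lp.fourierTransformₗᵢ ℝ ℂ).symm.norm_map _

lemma ahs_plancherel {G : ℝ → ℂ} (h1 : Integrable G) (h2 : MemLp G 2) :
    ∫⁻ x, (‖𝓕 G x‖₊ : ℝ≥0∞) ^ 2 = ∫⁻ x, (‖G x‖₊ : ℝ≥0∞) ^ 2 := by
  have e : ∫⁻ x, (‖G x‖₊ : ℝ≥0∞) ^ 2 = ∫⁻ x, (‖h2.toLp G x‖₊ : ℝ≥0∞) ^ 2 := by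
    apply lintegral_congr_ae
    filter_upwards [h2.coeFn_toLp] with x hx
    rw [hx]
  have e' : ∫⁻ x, (‖𝓕 G x‖₊ : ℝ≥0∞) ^ 2 =
      ∫⁻ x, (‖(𝓕 (h2.toLp G) : Lp ℂ 2 (volume : Measure ℝ)) x‖₊ : ℝ≥0∞) ^ 2 := by
    apply lintegral_congr_ae
    filter_upwards [ahs_fourier_L1_L2 h1 h2] with x hx
    rw [hx]
  rw [e, e', ahs_L2_lintegral, ahs_L2_lintegral]
  simp

lemma ahs_fourierInv_deriv {h g : ℝ → ℂ} (k : ℝ) (hd : ∀ u, HasDerivAt h (k * h u + g u) u)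
    (hh : MemLp h 2) (hg : MemLp g 2) :
    (𝓕⁻ (hg.toLp g) : Lp ℂ 2 (volume : Measure ℝ)) =ᵐ[volume]
      fun ξ => (-(2 * Real.pi * Complex.I * ξ) - k) *
        (𝓕⁻ (hh.toLp h) : Lp ℂ 2 (volume : Measure ℝ)) ξ := by
  set A := (𝓕⁻ (hh.toLp h) : Lp ℂ 2 (volume : Measure ℝ))
  have hA := Lp.memLp A
  have pair : ∀ (q : ℝ → ℂ) (hq : MemLp q 2) (φ : 𝓢(ℝ, ℂ)),
      ∫ x, φ x * (𝓕⁻ (hq.toLp q) : Lp ℂ 2 (volume : Measure ℝ)) x = ∫ x, (𝓕⁻ φ) x * q x := by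
    intro q hq φ
    have a := congrArg (fun T => T φ) (Lp.fourierInv_toTemperedDistribution_eq (hq.toLp q))
    simp only [TemperedDistribution.fourierInv_apply, Lp.toTemperedDistribution_apply,
      smul_eq_mul] at a
    rw [← a]
    apply integral_congr_ae
    filter_upwards [hq.coeFn_toLp] with x hx
    rw [hx]
  have htg : (fun ξ : ℝ => (-(2 * Real.pi * Complex.I * ξ) - k)).HasTemperateGrowth := by
    fun_prop
  let m : 𝓢(ℝ, ℂ) → 𝓢(ℝ, ℂ) := SchwartzMap.smulLeftCLM ℂ
    (fun ξ : ℝ => (-(2 * Real.pi * Complex.I * ξ) - k))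
  have hm : ∀ (φ : 𝓢(ℝ, ℂ)) (x : ℝ), m φ x = (-(2 * Real.pi * Complex.I * x) - k) * φ x := by
    intro φ x
    simp [m, SchwartzMap.smulLeftCLM_apply_apply htg]
  apply ahs_ae_eq
  · exact (Lp.memLp _).locallyIntegrable (by norm_num)
  · exact (hA.locallyIntegrable (by norm_num)).continuous_mul (by fun_prop)
  · exact fun φ => ahs_mul_integrable (Lp.memLp _) φ
  · intro φ
    refine (ahs_mul_integrable hA (m φ)).congr ?_
    filter_upwards with x
    rw [hm]; ring
  · intro φ
    have e1 : ∫ x, φ x * ((-(2 * Real.pi * Complex.I * x) - k) * A x) = ∫ x, m φ x * A x := by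
      congr 1; ext x; rw [hm]; ring
    rw [e1, pair, pair]
    set ψ : 𝓢(ℝ, ℂ) := 𝓕⁻ φ with hψ
    have hder : (𝓕⁻ (m φ) : 𝓢(ℝ, ℂ)) =
        (-1 : ℂ) • SchwartzMap.derivCLM ℂ ℂ ψ + (-k : ℂ) • ψ := by
      have e2 : m φ = (-1 : ℂ) • ((2 * Real.pi * Complex.I) •
          SchwartzMap.smulLeftCLM ℂ (fun x : ℝ => inner ℝ x (1:ℝ)) φ) + (-k : ℂ) • φ := by
        ext x
        have ht : (fun x : ℝ => inner ℝ x (1:ℝ)).HasTemperateGrowth := by fun_prop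
        simp only [hm, _root_.add_apply, _root_.smul_apply,
          SchwartzMap.smulLeftCLM_apply_apply ht]
        simp
        ring
      rw [e2, FourierTransform.fourierInv_add, FourierTransform.fourierInv_smul (-1 : ℂ),
        FourierTransform.fourierInv_smul (-k : ℂ), ← SchwartzMap.lineDerivOp_fourierInv_eq]
      rfl
    have i1 := ahs_mul_integrable hh ψ
    have i2 := ahs_mul_integrable hg ψ
    have i3 := ahs_mul_integrable hh (SchwartzMap.derivCLM ℂ ℂ ψ)
    have i4 : Integrable (fun x => ψ x * (k * h x + g x)) := by
      refine ((i1.const_mul (k:ℂ)).add i2).congr ?_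
      filter_upwards with x
      simp; ring
    have ibp := integral_mul_deriv_eq_deriv_mul_of_integrable (u := ψ) (v := h)
      (u' := SchwartzMap.derivCLM ℂ ℂ ψ) (v' := fun u => k * h u + g u)
      (fun x _ => ψ.differentiableAt.hasDerivAt) (fun x _ => hd x) i4 i3 i1
    have s1 : ∫ x, ψ x * (k * h x + g x) = k * (∫ x, ψ x * h x) + ∫ x, ψ x * g x := by
      rw [← integral_const_mul, ← integral_add (i1.const_mul (k:ℂ)) i2]
      congr 1; ext x; ring
    have s2 : ∫ x, (𝓕⁻ (m φ) : 𝓢(ℝ, ℂ)) x * h x =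
        - (∫ x, SchwartzMap.derivCLM ℂ ℂ ψ x * h x) - k * ∫ x, ψ x * h x := by
      rw [← integral_const_mul, ← integral_neg, ← integral_sub (by exact i3.neg) (i1.const_mul (k:ℂ)), hder]
      congr 1; ext x; simp; ring
    rw [s2, ← ibp, s1]
    ring
end fourierpart

lemma ahs_exp_subst (g : ℝ → ℝ≥0∞) :
    ∫⁻ x in Ioi (0:ℝ), g x = ∫⁻ u : ℝ, ENNReal.ofReal (Real.exp u) * g (Real.exp u) := by
  have := lintegral_image_eq_lintegral_abs_deriv_mul (s := univ) (f := Real.exp) (f' := Real.exp)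
    MeasurableSet.univ (fun x _ => (Real.hasDerivAt_exp x).hasDerivWithinAt)
    Real.exp_injective.injOn g
  simpa [image_univ, Real.range_exp] using this

noncomputable def ahsH (f : ℝ → ℂ) (n : ℕ) (u : ℝ) : ℂ :=
  (Real.exp ((n + 1) * u) : ℝ) * iteratedDerivWithin n f (Ioi 0) (Real.exp u)

lemma ahsH_deriv {f : ℝ → ℂ} (hf : ContDiffOn ℝ (⊤ : ℕ∞) f (Ioi 0)) (n : ℕ) (u : ℝ) :
    HasDerivAt (ahsH f n) (((n + 1 : ℕ) : ℝ) * ahsH f n u + ahsH f (n + 1) u) u := by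
  have hu : UniqueDiffOn ℝ (Ioi (0:ℝ)) := uniqueDiffOn_Ioi 0
  have h1 : DifferentiableOn ℝ (iteratedDerivWithin n f (Ioi 0)) (Ioi 0) :=
    hf.differentiableOn_iteratedDerivWithin (by exact_mod_cast WithTop.coe_lt_top n) hu
  have hx : Ioi (0:ℝ) ∈ nhds (Real.exp u) := Ioi_mem_nhds (Real.exp_pos u)
  have h2 : HasDerivAt (iteratedDerivWithin n f (Ioi 0))
      (iteratedDerivWithin (n+1) f (Ioi 0) (Real.exp u)) (Real.exp u) := by
    rw [iteratedDerivWithin_succ]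
    exact (h1 _ (Real.exp_pos u)).hasDerivWithinAt.hasDerivAt hx
  have h3 := h2.scomp u (Real.hasDerivAt_exp u)
  have h4 : HasDerivAt (fun u : ℝ => Real.exp (((n:ℝ) + 1) * u))
      (Real.exp (((n:ℝ) + 1) * u) * (n + 1)) u := by
    simpa using ((hasDerivAt_id u).const_mul ((n:ℝ) + 1)).exp
  have h5 := (h4.ofReal_comp).mul h3
  refine h5.congr_deriv ?_
  have e : Real.exp (((n+1:ℕ):ℝ) * u + u) = Real.exp (((n:ℝ) + 1) * u) * Real.exp u := by
    rw [← Real.exp_add]; push_cast; rfl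
  simp only [ahsH]
  rw [show (((n+1:ℕ):ℝ) + 1) * u = ((n+1:ℕ):ℝ) * u + u by ring, e]
  simp
  ring

lemma ahsH_lintegral (f : ℝ → ℂ) (n : ℕ) :
    ∫⁻ u, (‖ahsH f n u‖₊ : ℝ≥0∞) ^ 2 = ∫⁻ x in Ioi (0 : ℝ),
          ENNReal.ofReal (x ^ (2 * n + 1)) *
            (‖iteratedDerivWithin n f (Ioi 0) x‖₊ : ℝ≥0∞) ^ 2 := by
  rw [ahs_exp_subst]
  congr 1
  ext u
  rw [← mul_assoc, ← ENNReal.ofReal_mul (Real.exp_pos _).le, ahsH, nnnorm_mul]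
  push_cast
  rw [mul_pow]
  congr 1
  rw [← enorm_eq_nnnorm, ← ofReal_norm, ← ENNReal.ofReal_pow (norm_nonneg _)]
  congr 1
  rw [Complex.norm_exp,
    ← Real.exp_nat_mul, ← Real.exp_nat_mul, ← Real.exp_add]
  congr 1
  simp
  ring

lemma ahs_memLp_of {h : ℝ → ℂ} (hm : AEStronglyMeasurable h)
    (hi : ∫⁻ u, (‖h u‖₊ : ℝ≥0∞) ^ 2 < ⊤) : MemLp h 2 := by
  refine ⟨hm, ?_⟩
  rw [eLpNorm_lt_top_iff_lintegral_rpow_enorm_lt_top (by norm_num) (by norm_num)]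
  simpa using! hi

open FourierTransform in
lemma ahs_main (f : ℝ → ℂ) (hf : ContDiffOn ℝ (⊤ : ℕ∞) f (Ioi 0))
    (hsum :
      ∑' n : ℕ, ENNReal.ofReal (ahsC n) *
        ∫⁻ x in Ioi (0 : ℝ), ENNReal.ofReal (x ^ (2 * n + 1)) *
            (‖iteratedDerivWithin n f (Ioi 0) x‖₊ : ℝ≥0∞) ^ 2 < ⊤) :
    ∃ A : ℝ → ℂ, StronglyMeasurable A ∧
      (Integrable A → 𝓕 A =ᵐ[volume] fun u => Real.exp u * f (Real.exp u)) ∧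
      ∑' n : ℕ, ENNReal.ofReal (ahsC n) *
        ∫⁻ x in Ioi (0 : ℝ), ENNReal.ofReal (x ^ (2 * n + 1)) *
            (‖iteratedDerivWithin n f (Ioi 0) x‖₊ : ℝ≥0∞) ^ 2 =
      ∫⁻ ξ, (‖A ξ‖₊ : ℝ≥0∞) ^ 2 * ∫⁻ θ in Ioo (-(Real.pi / 4)) (Real.pi / 4),
        ENNReal.ofReal (Real.exp (4 * Real.pi * ξ * θ)) := by
  have hmem : ∀ n, MemLp (ahsH f n) 2 := by
    intro n
    have hc : Continuous (ahsH f n) := continuous_iff_continuousAt.2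
      fun u => (ahsH_deriv hf n u).continuousAt
    apply ahs_memLp_of hc.aestronglyMeasurable
    rw [ahsH_lintegral]
    have h1 := ENNReal.ne_top_of_tsum_ne_top hsum.ne n
    have h2 : ENNReal.ofReal (ahsC n) ≠ 0 := by simpa using ahsC_pos n
    exact lt_top_iff_ne_top.2 fun h => h1 (by rw [h, ENNReal.mul_top h2])
  let An : ℕ → Lp ℂ 2 (volume : Measure ℝ) := fun n => 𝓕⁻ ((hmem n).toLp (ahsH f n))
  have hAn : ∀ n, An n =ᵐ[volume] fun ξ =>
      (∏ k ∈ Finset.range n, (-(2 * Real.pi * Complex.I * ξ) - ((k + 1 : ℕ) : ℝ))) * An 0 ξ := by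
    intro n
    induction n with
    | zero => simp
    | succ n ih =>
      filter_upwards [ih, ahs_fourierInv_deriv _ (ahsH_deriv hf n) (hmem n) (hmem (n+1))] with ξ h1 h2
      rw [h2, Finset.prod_range_succ]
      change _ * An n ξ = _
      rw [h1]
      ring
  refine ⟨An 0, Lp.stronglyMeasurable _, ?_, ?_⟩
  · intro hi
    have h1 := ahs_fourier_L1_L2 hi (Lp.memLp (An 0))
    rw [Lp.toLp_coeFn] at h1
    have h2 : 𝓕 (An 0) = (hmem 0).toLp (ahsH f 0) := fourier_fourierInv_eq _
    rw [h2] at h1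
    filter_upwards [h1, (hmem 0).coeFn_toLp] with u a b
    rw [← a, b]
    simp [ahsH]
  · have e : ∀ n, ENNReal.ofReal (ahsC n) * ∫⁻ x in Ioi (0 : ℝ), ENNReal.ofReal (x ^ (2 * n + 1)) *
            (‖iteratedDerivWithin n f (Ioi 0) x‖₊ : ℝ≥0∞) ^ 2 =
        ∫⁻ ξ, (‖An 0 ξ‖₊ : ℝ≥0∞) ^ 2 * ENNReal.ofReal (ahsC n * ahsP (-(2 * Real.pi * ξ)) n) := by
      intro n
      rw [← ahsH_lintegral, ← ahs_plancherel_inv (hmem n), ← lintegral_const_mul' _ _ (by simp)]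
      apply lintegral_congr_ae
      filter_upwards [hAn n] with ξ h
      change _ * (‖An n ξ‖₊ : ℝ≥0∞) ^ 2 = _
      rw [h, ENNReal.ofReal_mul (ahsC_pos n).le, nnnorm_mul]
      push_cast
      have : (‖∏ k ∈ Finset.range n, (-(2 * Real.pi * Complex.I * ξ) - ((k + 1 : ℕ) : ℝ))‖₊ : ℝ≥0∞) ^ 2
          = ENNReal.ofReal (ahsP (-(2 * Real.pi * ξ)) n) := by
        rw [← enorm_eq_nnnorm, ← ofReal_norm, ← ENNReal.ofReal_pow (norm_nonneg _)]
        congr 1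
        rw [norm_prod, ← Finset.prod_pow, ahsP]
        apply Finset.prod_congr rfl
        intro k _
        rw [← Complex.normSq_eq_norm_sq, Complex.normSq_apply]
        simp
        ring
      push_cast at this
      rw [mul_pow, this]
      ring
    simp_rw [e]
    have hmA : Measurable (An 0) := (Lp.stronglyMeasurable _).measurable
    rw [← lintegral_tsum]
    · congr 1
      ext ξ
      rw [ENNReal.tsum_mul_left, ahs_weight]
      congr 3
      ext θ
      congr 2
      ring
    · intro n
      have : Measurable (fun ξ : ℝ => ahsP (-(2 * Real.pi * ξ)) n) := by
        unfold ahsP; fun_prop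
      fun_prop

lemma ahs_A_L2 {A : ℝ → ℂ} (hA : StronglyMeasurable A)
    (hfin : ∫⁻ ξ, (‖A ξ‖₊ : ℝ≥0∞) ^ 2 * ∫⁻ θ in Ioo (-(Real.pi / 4)) (Real.pi / 4),
        ENNReal.ofReal (Real.exp (4 * Real.pi * ξ * θ)) < ⊤) {a : ℝ} (ha0 : 0 ≤ a)
    (ha : a < Real.pi / 4) :
    MemLp (fun ξ : ℝ => A ξ * (Real.exp (2 * Real.pi * a * |ξ|) : ℝ)) 2 := by
  apply ahs_memLp_of
  · exact (hA.mul (by fun_prop : Continuous fun ξ : ℝ =>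
      ((Real.exp (2 * Real.pi * a * |ξ|) : ℝ) : ℂ)).stronglyMeasurable).aestronglyMeasurable
  have hp := Real.pi_pos
  have hw : ∀ ξ : ℝ, ENNReal.ofReal (Real.pi / 4 - a) * ENNReal.ofReal (Real.exp (4 * Real.pi * a * |ξ|))
      ≤ ∫⁻ θ in Ioo (-(Real.pi / 4)) (Real.pi / 4), ENNReal.ofReal (Real.exp (4 * Real.pi * ξ * θ)) := by
    intro ξ
    have gen : ∀ s : Set ℝ, MeasurableSet s → s ⊆ Ioo (-(Real.pi / 4)) (Real.pi / 4) →
        volume s = ENNReal.ofReal (Real.pi / 4 - a) → (∀ θ ∈ s, a * |ξ| ≤ ξ * θ) →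
        ENNReal.ofReal (Real.pi / 4 - a) * ENNReal.ofReal (Real.exp (4 * Real.pi * a * |ξ|))
      ≤ ∫⁻ θ in Ioo (-(Real.pi / 4)) (Real.pi / 4), ENNReal.ofReal (Real.exp (4 * Real.pi * ξ * θ)) := by
      intro s hs hsub hv hle
      calc _ = ∫⁻ θ in s, ENNReal.ofReal (Real.exp (4 * Real.pi * a * |ξ|)) := by
            rw [setLIntegral_const, hv, mul_comm]
        _ ≤ ∫⁻ θ in s, ENNReal.ofReal (Real.exp (4 * Real.pi * ξ * θ)) := by
            apply setLIntegral_mono' hs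
            intro θ hθ
            apply ENNReal.ofReal_le_ofReal
            apply Real.exp_le_exp.2
            have := hle θ hθ
            nlinarith
        _ ≤ _ := lintegral_mono_set hsub
    rcases le_total 0 ξ with h | h
    · apply gen (Ioo a (Real.pi / 4)) measurableSet_Ioo
      · exact Ioo_subset_Ioo (by linarith) le_rfl
      · simp
      · intro θ hθ
        rw [abs_of_nonneg h]
        have := hθ.1
        nlinarith
    · apply gen (Ioo (-(Real.pi / 4)) (-a)) measurableSet_Ioo
      · exact Ioo_subset_Ioo le_rfl (by linarith)
      · simp; congr 1; ring
      · intro θ hθ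
        rw [abs_of_nonpos h]
        have := hθ.2
        nlinarith
  have h0 : ENNReal.ofReal (Real.pi / 4 - a) ≠ 0 := by simpa using ha
  have key : ENNReal.ofReal (Real.pi / 4 - a) *
      ∫⁻ ξ, (‖A ξ * (Real.exp (2 * Real.pi * a * |ξ|) : ℝ)‖₊ : ℝ≥0∞) ^ 2 < ⊤ := by
    refine lt_of_le_of_lt ?_ hfin
    rw [← lintegral_const_mul' _ _ (by simp)]
    apply lintegral_mono
    intro ξ
    have e : (‖((Real.exp (2 * Real.pi * a * |ξ|) : ℝ) : ℂ)‖₊ : ℝ≥0∞) ^ 2 =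
        ENNReal.ofReal (Real.exp (4 * Real.pi * a * |ξ|)) := by
      rw [← enorm_eq_nnnorm, ← ofReal_norm, ← ENNReal.ofReal_pow (norm_nonneg _), Complex.norm_real,
        Real.norm_of_nonneg (Real.exp_pos _).le, ← Real.exp_nat_mul]
      congr 2
      push_cast; ring
    dsimp only
    rw [nnnorm_mul, ENNReal.coe_mul, mul_pow, e, mul_left_comm]
    gcongr
    exact hw ξ
  exact lt_top_iff_ne_top.2 fun h => key.ne (by rw [h, ENNReal.mul_top h0])

lemma ahs_exp_abs_integrable {b : ℝ} (hb : 0 < b) : Integrable (fun ξ : ℝ => Real.exp (-b * |ξ|)) := by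
  have h1 : IntegrableOn (fun ξ : ℝ => Real.exp (-b * |ξ|)) (Ioi 0) :=
    (exp_neg_integrableOn_Ioi 0 hb).congr_fun
      (fun x hx => by simp only; rw [abs_of_pos hx]) measurableSet_Ioi
  have h2 : IntegrableOn (fun ξ : ℝ => Real.exp (-b * |ξ|)) (Iic 0) := by
    refine (integrableOn_exp_mul_Iic hb 0).congr_fun
      (fun x hx => by simp only; rw [abs_of_nonpos hx]; ring_nf) measurableSet_Iic
  rw [← integrableOn_univ, ← Iic_union_Ioi (a := (0:ℝ))]
  exact h2.union h1

lemma ahs_A_L1 {A : ℝ → ℂ} (hA : StronglyMeasurable A)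
    (hfin : ∫⁻ ξ, (‖A ξ‖₊ : ℝ≥0∞) ^ 2 * ∫⁻ θ in Ioo (-(Real.pi / 4)) (Real.pi / 4),
        ENNReal.ofReal (Real.exp (4 * Real.pi * ξ * θ)) < ⊤) {a : ℝ} (ha0 : 0 ≤ a)
    (ha : a < Real.pi / 4) :
    Integrable (fun ξ : ℝ => A ξ * (Real.exp (2 * Real.pi * a * |ξ|) : ℝ)) := by
  obtain ⟨b, hab, hb⟩ := exists_between ha
  have h1 := ahs_A_L2 hA hfin (ha0.trans hab.le) hb
  have hp := Real.pi_pos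
  have h2 : MemLp (fun ξ : ℝ => ((Real.exp (-(2 * Real.pi * (b - a)) * |ξ|) : ℝ) : ℂ)) 2 := by
    apply ahs_memLp_of (by apply Continuous.aestronglyMeasurable; fun_prop)
    have : ∀ ξ : ℝ, (‖((Real.exp (-(2 * Real.pi * (b - a)) * |ξ|) : ℝ) : ℂ)‖₊ : ℝ≥0∞) ^ 2 =
        ENNReal.ofReal (Real.exp (-(4 * Real.pi * (b - a)) * |ξ|)) := by
      intro ξ
      rw [← enorm_eq_nnnorm, ← ofReal_norm, ← ENNReal.ofReal_pow (norm_nonneg _), Complex.norm_real,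
        Real.norm_of_nonneg (Real.exp_pos _).le, ← Real.exp_nat_mul]
      congr 2
      push_cast; ring
    simp_rw [this]
    have hi := ahs_exp_abs_integrable (b := 4 * Real.pi * (b - a))
      (mul_pos (by positivity) (by linarith))
    have := hi.hasFiniteIntegral
    rw [hasFiniteIntegral_iff_ofReal (by filter_upwards with x using (Real.exp_pos _).le)] at this
    exact this
  refine (h1.integrable_mul h2).congr ?_
  filter_upwards with ξ
  simp only [Pi.mul_apply]
  rw [mul_assoc, ← Complex.ofReal_mul, ← Real.exp_add]
  congr 3
  ring

noncomputable def ahsHol (A : ℝ → ℂ) (w : ℂ) : ℂ :=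
  ∫ ξ : ℝ, A ξ * Complex.exp (-(2 * Real.pi * Complex.I * ξ) * w)

lemma ahs_norm_exp (ξ : ℝ) (w : ℂ) :
    ‖Complex.exp (-(2 * Real.pi * Complex.I * ξ) * w)‖ = Real.exp (2 * Real.pi * ξ * w.im) := by
  rw [Complex.norm_exp]
  congr 1
  simp

lemma ahsHol_diff {A : ℝ → ℂ} (hA : StronglyMeasurable A)
    (hIntg : ∀ a : ℝ, 0 ≤ a → a < Real.pi / 4 →
      Integrable (fun ξ : ℝ => A ξ * (Real.exp (2 * Real.pi * a * |ξ|) : ℝ)))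
    {w : ℂ} (hw : |w.im| < Real.pi / 4) : DifferentiableAt ℂ (ahsHol A) w := by
  have hp := Real.pi_pos
  obtain ⟨a, ha1, ha2⟩ := exists_between hw
  obtain ⟨b, hb1, hb2⟩ := exists_between ha2
  have ha0 : 0 < a := lt_of_le_of_lt (abs_nonneg _) ha1
  have hs : {z : ℂ | |z.im| < a} ∈ nhds w :=
    (isOpen_lt (by fun_prop) continuous_const).mem_nhds ha1
  have hmeas : ∀ z : ℂ, AEStronglyMeasurable
      (fun ξ : ℝ => A ξ * Complex.exp (-(2 * Real.pi * Complex.I * ξ) * z)) := fun z =>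
    (hA.mul (by fun_prop : Continuous fun ξ : ℝ =>
      Complex.exp (-(2 * Real.pi * Complex.I * ξ) * z)).stronglyMeasurable).aestronglyMeasurable
  have hle : ∀ z : ℂ, |z.im| < a → ∀ ξ : ℝ, ‖Complex.exp (-(2 * Real.pi * Complex.I * ξ) * z)‖ ≤
      Real.exp (2 * Real.pi * a * |ξ|) := by
    intro z hz ξ
    rw [ahs_norm_exp]
    apply Real.exp_le_exp.2
    have : ξ * z.im ≤ |ξ| * a := (le_abs_self _).trans (by rw [abs_mul]; gcongr)
    nlinarith
  refine (hasDerivAt_integral_of_dominated_loc_of_deriv_le (μ := volume) (𝕜 := ℂ)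
    (F := fun (z : ℂ) (ξ : ℝ) => A ξ * Complex.exp (-(2 * Real.pi * Complex.I * ξ) * z))
    (F' := fun (z : ℂ) (ξ : ℝ) => A ξ * (Complex.exp (-(2 * Real.pi * Complex.I * ξ) * z) *
      (-(2 * Real.pi * Complex.I * ξ))))
    (bound := fun ξ => (1 / (b - a)) * ‖A ξ * (Real.exp (2 * Real.pi * b * |ξ|) : ℝ)‖)
    hs ?_ ?_ ?_ ?_ ?_ ?_).2.differentiableAt
  · filter_upwards with z using hmeas z
  · refine (hIntg a ha0.le ha2).mono (hmeas w) ?_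
    filter_upwards with ξ
    rw [norm_mul, norm_mul, Complex.norm_real, Real.norm_of_nonneg (Real.exp_pos _).le]
    gcongr
    exact hle w ha1 ξ
  · exact (hA.mul (by fun_prop : Continuous fun ξ : ℝ =>
      Complex.exp (-(2 * Real.pi * Complex.I * ξ) * w) *
      (-(2 * Real.pi * Complex.I * ξ))).stronglyMeasurable).aestronglyMeasurable
  · filter_upwards with ξ z hz
    have h1 := hle z hz ξ
    have h2 : ‖(-(2 * Real.pi * Complex.I * ξ) : ℂ)‖ = 2 * Real.pi * |ξ| := by
      simp [abs_of_pos hp]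
    rw [norm_mul, norm_mul, norm_mul, h2, Complex.norm_real, Real.norm_of_nonneg (Real.exp_pos _).le,
      mul_left_comm (1 / (b - a))]
    refine mul_le_mul_of_nonneg_left ?_ (norm_nonneg (A ξ))
    have hba : 0 < b - a := by linarith
    have h3 : 2 * Real.pi * |ξ| ≤ 1 / (b - a) * Real.exp (2 * Real.pi * (b - a) * |ξ|) := by
      have := Real.add_one_le_exp (2 * Real.pi * (b - a) * |ξ|)
      rw [one_div, inv_mul_eq_div, le_div_iff₀ hba]
      linarith
    calc _ ≤ Real.exp (2 * Real.pi * a * |ξ|) *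
          (1 / (b - a) * Real.exp (2 * Real.pi * (b - a) * |ξ|)) := by gcongr
      _ = _ := by
        rw [mul_left_comm, ← Real.exp_add]
        congr 2
        ring_nf
  · exact (hIntg b (ha0.le.trans hb1.le) hb2).norm.const_mul _
  · filter_upwards with ξ z hz
    have : HasDerivAt (fun z : ℂ => -(2 * Real.pi * Complex.I * ξ) * z)
      (-(2 * Real.pi * Complex.I * ξ)) z := by
      simpa using (hasDerivAt_id z).const_mul (-(2 * Real.pi * Complex.I * ξ))
    exact this.cexp.const_mul _

open FourierTransform in
lemma ahsHol_eq_fourier (A : ℝ → ℂ) (u θ : ℝ) :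
    ahsHol A (u + θ * Complex.I) =
      𝓕 (fun ξ : ℝ => A ξ * (Real.exp (2 * Real.pi * θ * ξ) : ℝ)) u := by
  rw [Real.fourier_eq', ahsHol]
  congr 1
  ext ξ
  rw [smul_eq_mul, mul_left_comm, Complex.ofReal_exp, ← Complex.exp_add]
  congr 2
  simp
  ring_nf
  simp

lemma ahsHol_plancherel {A : ℝ → ℂ} (hA : StronglyMeasurable A)
    (hfin : ∫⁻ ξ, (‖A ξ‖₊ : ℝ≥0∞) ^ 2 * ∫⁻ θ in Ioo (-(Real.pi / 4)) (Real.pi / 4),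
        ENNReal.ofReal (Real.exp (4 * Real.pi * ξ * θ)) < ⊤) {θ : ℝ} (hθ : |θ| < Real.pi / 4) :
    ∫⁻ u : ℝ, (‖ahsHol A (u + θ * Complex.I)‖₊ : ℝ≥0∞) ^ 2 =
      ∫⁻ ξ, (‖A ξ‖₊ : ℝ≥0∞) ^ 2 * ENNReal.ofReal (Real.exp (4 * Real.pi * ξ * θ)) := by
  have hp := Real.pi_pos
  have h1 := ahs_A_L1 hA hfin (abs_nonneg _) hθ
  have h2 := ahs_A_L2 hA hfin (abs_nonneg _) hθ
  have hm : AEStronglyMeasurable (fun ξ : ℝ => A ξ * (Real.exp (2 * Real.pi * θ * ξ) : ℝ)) :=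
    (hA.mul (by fun_prop : Continuous fun ξ : ℝ =>
      ((Real.exp (2 * Real.pi * θ * ξ) : ℝ) : ℂ)).stronglyMeasurable).aestronglyMeasurable
  have hle : ∀ ξ : ℝ, ‖A ξ * (Real.exp (2 * Real.pi * θ * ξ) : ℝ)‖ ≤
      ‖A ξ * (Real.exp (2 * Real.pi * |θ| * |ξ|) : ℝ)‖ := by
    intro ξ
    rw [norm_mul, norm_mul, Complex.norm_real, Complex.norm_real,
      Real.norm_of_nonneg (Real.exp_pos _).le, Real.norm_of_nonneg (Real.exp_pos _).le]
    refine mul_le_mul_of_nonneg_left (Real.exp_le_exp.2 ?_) (norm_nonneg _)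
    rw [mul_assoc, mul_assoc _ |θ|, ← abs_mul]
    exact mul_le_mul_of_nonneg_left (le_abs_self _) (by positivity)
  simp_rw [ahsHol_eq_fourier]
  rw [ahs_plancherel (h1.mono hm (by filter_upwards with ξ using hle ξ))
    (h2.mono hm (by filter_upwards with ξ using hle ξ))]
  congr 1
  ext ξ
  rw [nnnorm_mul, ENNReal.coe_mul, mul_pow]
  congr 1
  rw [← enorm_eq_nnnorm, ← ofReal_norm, ← ENNReal.ofReal_pow (norm_nonneg _), Complex.norm_real,
        Real.norm_of_nonneg (Real.exp_pos _).le, ← Real.exp_nat_mul]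
  congr 2
  push_cast; ring

lemma ahs_exp_mem_Delta (u : ℝ) {θ : ℝ} (h : θ ∈ Ioo (-Real.pi) Real.pi) :
    Complex.exp (u + θ * Complex.I) ∈ Delta ↔ θ ∈ Ioo (-(Real.pi / 4)) (Real.pi / 4) := by
  have hp := Real.pi_pos
  have hre : (Complex.exp (u + θ * Complex.I)).re = Real.exp u * Real.cos θ := by
    simp [Complex.exp_re]
  have him : (Complex.exp (u + θ * Complex.I)).im = Real.exp u * Real.sin θ := by
    simp [Complex.exp_im]
  have he := Real.exp_pos u
  simp only [Delta, mem_ofPred_eq, hre, him, abs_mul, abs_of_pos he, mul_pos_iff_of_pos_left he,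
    mul_lt_mul_iff_right₀ he]
  have h2 := Real.cos_two_mul θ
  have h3 := Real.sin_sq_add_cos_sq θ
  constructor
  · rintro ⟨h0, h1⟩
    have hsq : Real.sin θ ^ 2 < Real.cos θ ^ 2 := by
      rw [sq_lt_sq, abs_of_pos h0]; exact h1
    have hc2 : 0 < Real.cos (2 * θ) := by nlinarith
    by_contra hcon
    have habs : Real.pi / 4 ≤ |θ| := by
      by_contra h4
      exact hcon (abs_lt.1 (not_le.1 h4))
    have hπ : |θ| < Real.pi := abs_lt.2 h
    rw [← Real.cos_abs] at h0
    have h5 : |θ| < Real.pi / 2 := by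
      by_contra h6
      have := Real.cos_nonpos_of_pi_div_two_le_of_le (not_lt.1 h6) (by linarith)
      linarith
    rw [← Real.cos_abs, abs_mul, abs_of_pos (by norm_num : (0:ℝ) < 2)] at hc2
    have := Real.cos_nonpos_of_pi_div_two_le_of_le (x := 2 * |θ|) (by linarith) (by linarith)
    linarith
  · rintro ⟨h0, h1⟩
    have hc : 0 < Real.cos θ := Real.cos_pos_of_mem_Ioo ⟨by linarith, by linarith⟩
    have hc2 : 0 < Real.cos (2 * θ) := Real.cos_pos_of_mem_Ioo ⟨by linarith, by linarith⟩
    refine ⟨hc, ?_⟩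
    rw [← abs_of_pos hc, ← sq_lt_sq]
    nlinarith

lemma ahs_isOpen_Delta : IsOpen Delta :=
  (isOpen_lt continuous_const Complex.continuous_re).inter
    (isOpen_lt (by fun_prop) Complex.continuous_re)

lemma ahs_log_im {z : ℂ} (hz : z ∈ Delta) : |(Complex.log z).im| < Real.pi / 4 := by
  have hz0 : z ≠ 0 := by
    rintro rfl
    simpa using hz.1
  have hlt : |z.arg| < Real.pi := by
    have : |z.arg| < Real.pi / 2 := Complex.abs_arg_lt_pi_div_two_iff.2 (Or.inl hz.1)
    linarith [Real.pi_pos]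
  rw [Complex.log_im]
  apply abs_lt.2
  rw [← mem_Ioo, ← ahs_exp_mem_Delta (Complex.log z).re (abs_lt.1 hlt), ← Complex.log_im,
    Complex.re_add_im, Complex.exp_log hz0]
  exact hz

lemma ahs_area {H : ℂ → ℂ} (hH : ∀ w : ℂ, |w.im| < Real.pi / 4 → DifferentiableAt ℂ H w) :
    DifferentiableOn ℂ (fun z => H (Complex.log z) / z) Delta ∧
    ∫⁻ z in Delta, (‖H (Complex.log z) / z‖₊ : ℝ≥0∞) ^ 2 =
      ∫⁻ θ in Ioo (-(Real.pi / 4)) (Real.pi / 4), ∫⁻ u : ℝ,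
        (‖H (u + θ * Complex.I)‖₊ : ℝ≥0∞) ^ 2 := by
  have hp := Real.pi_pos
  have hd : DifferentiableOn ℂ (fun z => H (Complex.log z) / z) Delta := by
    intro z hz
    have hz0 : z ≠ 0 := by
      rintro rfl
      simpa using hz.1
    have h1 : DifferentiableAt ℂ Complex.log z :=
      Complex.differentiableAt_log (Or.inl hz.1)
    have h2 : DifferentiableAt ℂ (fun z => H (Complex.log z)) z :=
      (hH _ (ahs_log_im hz)).comp z h1
    exact (h2.div differentiableAt_id hz0).differentiableWithinAt
  refine ⟨hd, ?_⟩
  set g : ℂ → ℝ≥0∞ := Delta.indicator (fun z => (‖H (Complex.log z) / z‖₊ : ℝ≥0∞) ^ 2) with hg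
  have hms : MeasurableSet Delta := ahs_isOpen_Delta.measurableSet
  have hgm : Measurable g := by
    have h1 : ContinuousOn (fun z => (‖H (Complex.log z) / z‖₊ : ℝ≥0∞) ^ 2) Delta := by
      have : Continuous (fun w : ℂ => (‖w‖₊ : ℝ≥0∞) ^ 2) := by
        have := ENNReal.continuous_pow 2
        fun_prop
      exact this.comp_continuousOn hd.continuousOn
    classical
    have := h1.measurable_piecewise (g := fun _ => 0) continuousOn_const hms
    rw [hg, ← piecewise_eq_indicator]
    exact this
  rw [← lintegral_indicator hms, ← Complex.lintegral_comp_polarCoord_symm]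
  have hsymm : Measurable (fun p : ℝ × ℝ => ENNReal.ofReal p.1 • g (Complex.polarCoord.symm p)) := by
    have : Continuous fun p : ℝ × ℝ => Complex.polarCoord.symm p := by
      simp only [Complex.polarCoord_symm_apply]
      fun_prop
    exact (ENNReal.measurable_ofReal.comp measurable_fst).smul (hgm.comp this.measurable)
  change ∫⁻ p in Ioi (0:ℝ) ×ˢ Ioo (-Real.pi) Real.pi,
    ENNReal.ofReal p.1 • g (Complex.polarCoord.symm p) = _
  rw [Measure.volume_eq_prod, ← Measure.prod_restrict, lintegral_prod_symm _ hsymm.aemeasurable]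
  have inner : ∀ θ ∈ Ioo (-Real.pi) Real.pi,
      ∫⁻ r in Ioi (0:ℝ), ENNReal.ofReal r • g (Complex.polarCoord.symm (r, θ)) =
      (Ioo (-(Real.pi / 4)) (Real.pi / 4)).indicator (fun θ : ℝ => ∫⁻ u : ℝ,
        (‖H (u + θ * Complex.I)‖₊ : ℝ≥0∞) ^ 2) θ := by
    intro θ hθ
    rw [ahs_exp_subst]
    have hpt : ∀ u : ℝ, Complex.polarCoord.symm (Real.exp u, θ) =
        Complex.exp (u + θ * Complex.I) := by
      intro u
      rw [Complex.polarCoord_symm_apply, Complex.exp_add, Complex.exp_mul_I]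
      simp
    simp only [hpt]
    by_cases hin : θ ∈ Ioo (-(Real.pi / 4)) (Real.pi / 4)
    · rw [indicator_of_mem hin]
      congr 1
      ext u
      rw [hg, indicator_of_mem ((ahs_exp_mem_Delta u hθ).2 hin), Complex.log_exp
        (by simpa using hθ.1) (by simpa using hθ.2.le), smul_eq_mul, nnnorm_div]
      have he : (‖Complex.exp (u + θ * Complex.I)‖₊ : ℝ≥0∞) = ENNReal.ofReal (Real.exp u) := by
        rw [← enorm_eq_nnnorm, ← ofReal_norm, Complex.norm_exp]
        simp
      rw [ENNReal.coe_div (by simp), he, ← mul_assoc, ← sq, ← mul_pow,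
        ENNReal.mul_div_cancel (by simpa using Real.exp_pos u) (by simp)]
    · rw [indicator_of_notMem hin]
      simp only [hg]
      have : ∀ u : ℝ, Complex.exp (u + θ * Complex.I) ∉ Delta := fun u h =>
        hin ((ahs_exp_mem_Delta u hθ).1 h)
      simp [indicator_of_notMem (this _)]
  rw [setLIntegral_congr_fun measurableSet_Ioo inner, lintegral_indicator measurableSet_Ioo,
    Measure.restrict_restrict measurableSet_Ioo,
    inter_eq_left.2 (Ioo_subset_Ioo (by linarith) (by linarith))]

theorem ahs_extension (f : ℝ → ℂ) (hf : ContDiffOn ℝ (⊤ : ℕ∞) f (Ioi 0))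
    (hsum :
      ∑' n : ℕ, ENNReal.ofReal ((2 : ℝ) ^ n / (Nat.factorial (2 * n + 1) : ℝ)) *
        ∫⁻ x in Ioi (0 : ℝ),
          ENNReal.ofReal (x ^ (2 * n + 1)) *
            (‖iteratedDerivWithin n f (Ioi 0) x‖₊ : ℝ≥0∞) ^ 2 ∂volume < ⊤) :
    ∃ F : ℂ → ℂ, DifferentiableOn ℂ F Delta ∧ (∀ x : ℝ, 0 < x → F (x : ℂ) = f x) ∧
      ∫⁻ z in Delta, (‖F z‖₊ : ℝ≥0∞) ^ 2 ∂volume =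
        ∑' n : ℕ, ENNReal.ofReal ((2 : ℝ) ^ n / (Nat.factorial (2 * n + 1) : ℝ)) *
          ∫⁻ x in Ioi (0 : ℝ),
            ENNReal.ofReal (x ^ (2 * n + 1)) *
              (‖iteratedDerivWithin n f (Ioi 0) x‖₊ : ℝ≥0∞) ^ 2 ∂volume := by
  obtain ⟨A, hA, hFA, hEq⟩ := ahs_main f hf hsum
  have hp := Real.pi_pos
  simp only [ahsC] at hEq
  rw [hEq] at hsum ⊢
  have hIntg : ∀ a : ℝ, 0 ≤ a → a < Real.pi / 4 →
      Integrable (fun ξ : ℝ => A ξ * (Real.exp (2 * Real.pi * a * |ξ|) : ℝ)) :=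
    fun a h0 h1 => ahs_A_L1 hA hsum h0 h1
  have hAi : Integrable A := by
    simpa using hIntg 0 le_rfl (by positivity)
  obtain ⟨hd, harea⟩ := ahs_area (H := ahsHol A) (fun w hw => ahsHol_diff hA hIntg hw)
  refine ⟨_, hd, ?_, ?_⟩
  · have hfour : ∀ u : ℝ, ahsHol A u = Real.exp u * f (Real.exp u) := by
      have h1 : (fun u : ℝ => ahsHol A u) =ᵐ[volume] fun u => Real.exp u * f (Real.exp u) := by
        filter_upwards [hFA hAi] with u hu
        rw [← hu]
        have := ahsHol_eq_fourier A u 0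
        simpa using this
      have h2 : Continuous (fun u : ℝ => ahsHol A u) := by
        refine continuous_iff_continuousAt.2 fun u => ?_
        have : ContinuousAt (ahsHol A) (u : ℂ) :=
          (ahsHol_diff hA hIntg (w := u) (by simpa using hp)).continuousAt
        exact this.comp Complex.continuous_ofReal.continuousAt
      have h3 : Continuous (fun u : ℝ => (Real.exp u : ℂ) * f (Real.exp u)) := by
        refine Continuous.mul (by fun_prop) ?_
        exact hf.continuousOn.comp_continuous Real.continuous_exp fun u => Real.exp_pos u
      exact fun u => congrFun ((Continuous.ae_eq_iff_eq volume h2 h3).1 h1) u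
    intro x hx
    have hx0 : (x : ℂ) ≠ 0 := by exact_mod_cast hx.ne'
    change ahsHol A (Complex.log x) / x = f x
    rw [← Complex.ofReal_log hx.le, hfour, Real.exp_log hx]
    field_simp
  · rw [harea]
    have hm1 : Measurable (fun ξ => (‖A ξ‖₊ : ℝ≥0∞) ^ 2) := by
      have := hA.measurable
      fun_prop
    calc _ = ∫⁻ θ in Ioo (-(Real.pi / 4)) (Real.pi / 4), ∫⁻ ξ, (‖A ξ‖₊ : ℝ≥0∞) ^ 2 *
          ENNReal.ofReal (Real.exp (4 * Real.pi * ξ * θ)) :=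
          setLIntegral_congr_fun measurableSet_Ioo fun θ hθ =>
            ahsHol_plancherel hA hsum (abs_lt.2 hθ)
      _ = ∫⁻ ξ, ∫⁻ θ in Ioo (-(Real.pi / 4)) (Real.pi / 4), (‖A ξ‖₊ : ℝ≥0∞) ^ 2 *
          ENNReal.ofReal (Real.exp (4 * Real.pi * ξ * θ)) := by
          apply lintegral_lintegral_swap
          apply Measurable.aemeasurable
          exact (hm1.comp measurable_snd).mul (by fun_prop)
      _ = _ := by
          congr 1
          ext ξ
          rw [lintegral_const_mul _ (by fun_prop)]
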